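/- arXiv:1410.1015 — 2 statements merged into one kernel-verified Lean document; each statement's English description precedes it below -/
import Mathlib

section
/- Let η > 1, let u_η be the exact high-contrast solution on [−2,2], and let u_0, u_1, u_2, … be the asymptotic expansion terms. Then for every x ∈ [−2,2] the series Σ_{j=0}^{∞} η^{−j} u_j(x) converges absolutely and its sum equals u_η(x). -/
/-- The exact high-contrast solution on `[-2,2]`. -/
noncomputable def uEta (η : ℝ) : ℝ → ℝ := fun x =>
  if x < -1 then η / (1 + η) * (2 * (x + 2))
  else if x < 1 then η / (1 + η) * (2 * (1 + (x + 1) / η))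
  else η / (1 + η) * (2 * (1 + 2 / η + (x - 1)))

/-- The terms of the asymptotic expansion of `u_η`. -/
noncomputable def uTerm : ℕ → ℝ → ℝ
  | 0 => fun x => if x < -1 then 2 * (x + 2) else if x < 1 then 2 else 2 * x
  | j + 1 => fun x =>
      if x < -1 then (-1 : ℝ) ^ (j + 1) * (2 * (x + 2))
      else if x < 1 then (-1 : ℝ) ^ (j + 2) * (2 * x)
      else (-1 : ℝ) ^ (j + 1) * (2 * (x - 2))

/-!
For `j ≥ 1` the expansion terms only alternate in sign, so the tail of `∑ j, η⁻¹ ^ j * u_j` is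
geometric with ratio `-η⁻¹` and first term `η⁻¹ * u_1`; it sums to `u_1 / (1 + η)`. On each of the
three pieces `u_η = u_0 + u_1 / (1 + η)`.
-/

theorem hasSum_of_geometric_tail {K E : Type*} [NormedDivisionRing K] [AddCommGroup E]
    [TopologicalSpace E] [ContinuousAdd E] [Module K E] [ContinuousSMul K E] {f : ℕ → E} {r : K}
    (hr : ‖r‖ < 1) (hf : ∀ j, f (j + 1) = r ^ j • f 1) :
    HasSum f (f 0 + (1 - r)⁻¹ • f 1) := by
  have tail : HasSum (fun j ↦ f (j + 1)) ((1 - r)⁻¹ • f 1) := by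
    rw [funext hf]
    exact (hasSum_geometric_of_norm_lt_one hr).smul_const (f 1)
  exact tail.zero_add

theorem uTerm_succ (j : ℕ) (x : ℝ) : uTerm (j + 1) x = (-1) ^ j * uTerm 1 x := by
  simp only [uTerm]
  split_ifs <;> ring

theorem uEta_eq_uTerm_zero_add_mul_uTerm_one {η : ℝ} (hη₀ : η ≠ 0) (hη₁ : 1 + η ≠ 0) (x : ℝ) :
    uEta η x = uTerm 0 x + (1 + η)⁻¹ * uTerm 1 x := by
  simp only [uEta, uTerm]
  split_ifs <;> field_simp <;> ring

theorem expansion_converges_pointwise_general {η : ℝ} (hη : 1 < |η|) (x : ℝ) :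
    HasSum (fun j : ℕ ↦ η⁻¹ ^ j * uTerm j x) (uEta η x) := by
  have hη₀ : η ≠ 0 := abs_pos.mp (zero_lt_one.trans hη)
  have hη₁ : 1 + η ≠ 0 := by
    intro h
    simp [eq_neg_of_add_eq_zero_right h] at hη
  have ratio_lt : ‖-η⁻¹‖ < 1 := by
    simpa only [norm_neg, norm_inv, Real.norm_eq_abs] using inv_lt_one_of_one_lt₀ hη
  have tail_eq (j : ℕ) :
      η⁻¹ ^ (j + 1) * uTerm (j + 1) x = (-η⁻¹) ^ j • (η⁻¹ ^ 1 * uTerm 1 x) := by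
    rw [uTerm_succ, neg_pow, smul_eq_mul]
    ring
  have sum_eq : uEta η x =
      η⁻¹ ^ 0 * uTerm 0 x + (1 - -η⁻¹)⁻¹ • (η⁻¹ ^ 1 * uTerm 1 x) := by
    have coeff_eq : (1 + η)⁻¹ = (1 - -η⁻¹)⁻¹ * η⁻¹ := by
      rw [← mul_inv, sub_neg_eq_add, one_add_mul, inv_mul_cancel₀ hη₀, add_comm]
    rw [uEta_eq_uTerm_zero_add_mul_uTerm_one hη₀ hη₁, coeff_eq, pow_zero, one_mul, pow_one,
      smul_eq_mul, mul_assoc]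
  rw [sum_eq]
  exact hasSum_of_geometric_tail (f := fun j ↦ η⁻¹ ^ j * uTerm j x) ratio_lt tail_eq

/-- For `η > 1`, at every `x ∈ [-2,2]` the series `∑_j η^{-j} u_j(x)` converges
absolutely and its sum equals `u_η(x)`. -/
theorem expansion_converges_pointwise (η : ℝ) (hη : 1 < η) :
    ∀ x ∈ Set.Icc (-2 : ℝ) 2,
      Summable (fun j : ℕ => |η⁻¹ ^ j * uTerm j x|) ∧
      ∑' j : ℕ, η⁻¹ ^ j * uTerm j x = uEta η x := by
  intro x _
  have h := expansion_converges_pointwise_general (hη.trans_le (le_abs_self η)) x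
  exact ⟨h.summable.abs, h.tsum_eq⟩
end

section
/- Let 0 < δ < 1, let χ be the one-dimensional harmonic characteristic function on [−1,1], and let f : [−1,1] → ℝ be continuous. Let w_1 : [−1,−δ] → ℝ be continuously differentiable on [−1,−δ], twice differentiable on (−1,−δ) with −w_1″(x) = f(x) for all x ∈ (−1,−δ), and w_1(−1) = w_1(−δ) = 0; let w_2 : [δ,1] → ℝ be continuously differentiable on [δ,1], twice differentiable on (δ,1) with −w_2″(x) = f(x) for all x ∈ (δ,1), and w_2(δ) = w_2(1) = 0. Set c_0 = ((1−δ)/2)·∫_{−1}^{1} f(x)χ(x) dx. Then the compatibility condition for the interior Neumann problem holds: (c_0/(1−δ) + w_1′(−δ)) − (−c_0/(1−δ) + w_2′(δ)) = ∫_{−δ}^{δ} f(x) dx, i.e., the one-sided derivative from the left at −δ of u_0 = c_0χ + w_1 minus the one-sided derivative from the right at δ of u_0 = c_0χ + w_2 equals ∫_{−δ}^{δ} f. -/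
/-- The one-dimensional harmonic characteristic function on `[-1,1]`:
piecewise linear, equal to `1` on `[-δ,δ]` and vanishing at `±1`. -/
noncomputable def chi (δ : ℝ) : ℝ → ℝ := fun x =>
  if x ≤ -δ then (x + 1) / (1 - δ)
  else if x ≤ δ then 1
  else (1 - x) / (1 - δ)

/-!
On each outer interval `χ` is affine with slope `±1/(1-δ)` and vanishes at the outer end, so
integrating `-w″ = f` by parts twice against `χ` leaves only the flux of `w` at the inner end:
`∫ f χ = ∫_{-δ}^{δ} f - w₁'(-δ) + w₂'(δ)`. The normalization of `c₀` makes `c₀/(1-δ)` half of this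
quantity, so the jump `2c₀/(1-δ)` in the slope of `c₀χ` cancels the two local fluxes and leaves
`∫_{-δ}^{δ} f`.
-/

open MeasureTheory Set

section Chi

variable {δ x : ℝ}

theorem chi_of_le_neg (hx : x ≤ -δ) : chi δ x = (x + 1) / (1 - δ) :=
  if_pos hx

theorem chi_of_mem_Ioc (hx : x ∈ Ioc (-δ) δ) : chi δ x = 1 := by
  rw [chi, if_neg hx.1.not_ge, if_pos hx.2]

theorem chi_of_lt (hδ : 0 ≤ δ) (hx : δ < x) : chi δ x = (1 - x) / (1 - δ) := by
  rw [chi, if_neg (by linarith), if_neg hx.not_ge]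

theorem continuous_chi (hδ0 : 0 ≤ δ) (hδ1 : δ < 1) : Continuous (chi δ) := by
  have hδ : 1 - δ ≠ 0 := (sub_pos.2 hδ1).ne'
  have hright : Continuous fun x : ℝ => if x ≤ δ then 1 else (1 - x) / (1 - δ) := by
    refine Continuous.if_le (by fun_prop) (by fun_prop) continuous_id continuous_const ?_
    rintro x rfl
    exact (div_self hδ).symm
  refine Continuous.if_le (by fun_prop) hright continuous_id continuous_const ?_
  rintro x rfl
  rw [if_pos (by linarith), neg_add_eq_sub, div_self hδ]

end Chi

/-- A classical solution `w` of the Poisson equation `-w″ = f` on `(a, b)` that is `C¹` up to the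
boundary. The derivative `w'` is carried as data, so that its values at `a` and `b` are the
one-sided derivatives of `w` (the boundary fluxes). -/
structure IsPoissonSolution {E : Type*} [NormedAddCommGroup E] [NormedSpace ℝ E]
    (f w w' : ℝ → E) (a b : ℝ) : Prop where
  hasDerivWithinAt : ∀ x ∈ Icc a b, HasDerivWithinAt w (w' x) (Icc a b) x
  continuousOn_deriv : ContinuousOn w' (Icc a b)
  hasDerivAt_deriv : ∀ x ∈ Ioo a b, HasDerivAt w' (-f x) x

section Vector

variable {E : Type*} [NormedAddCommGroup E] [NormedSpace ℝ E] {f : ℝ → E}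

section Poisson

variable {w w' : ℝ → E} {a b : ℝ}

theorem IsPoissonSolution.hasDerivAt_sub_sub_smul (h : IsPoissonSolution f w w' a b) (c : ℝ)
    {x : ℝ} (hx : x ∈ Ioo a b) :
    HasDerivAt (fun y => w y - (y - c) • w' y) ((x - c) • f x) x := by
  have hw : HasDerivAt w (w' x) x :=
    (h.hasDerivWithinAt x (Ioo_subset_Icc_self hx)).hasDerivAt (Icc_mem_nhds hx.1 hx.2)
  have hprod := ((hasDerivAt_id x).sub_const c).smul (h.hasDerivAt_deriv x hx)
  refine (hw.sub hprod).congr_deriv ?_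
  simp only [id_eq, smul_neg, one_smul]
  abel

theorem IsPoissonSolution.integral_sub_smul [CompleteSpace E] (h : IsPoissonSolution f w w' a b)
    (hab : a ≤ b) (hf : IntervalIntegrable f volume a b) (c : ℝ) :
    ∫ x in a..b, (x - c) • f x = (w b - (b - c) • w' b) - (w a - (a - c) • w' a) := by
  have hw : ContinuousOn w (Icc a b) := fun x hx => (h.hasDerivWithinAt x hx).continuousWithinAt
  have hw' := h.continuousOn_deriv
  exact intervalIntegral.integral_eq_sub_of_hasDerivAt_of_le hab (by fun_prop)
    (fun x hx => h.hasDerivAt_sub_sub_smul c hx) (hf.continuousOn_smul (by fun_prop))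

end Poisson

variable {δ : ℝ}

theorem integral_chi_smul (hδ0 : 0 ≤ δ) (hδ1 : δ < 1)
    (hf : IntervalIntegrable f volume (-1) 1) :
    ∫ x in (-1 : ℝ)..1, chi δ x • f x =
      (1 - δ)⁻¹ • (∫ x in (-1 : ℝ)..(-δ), (x + 1) • f x) + (∫ x in (-δ)..δ, f x) +
        (1 - δ)⁻¹ • ∫ x in δ..1, (1 - x) • f x := by
  have hint {a b : ℝ} (ha : a ∈ uIcc (-1) 1) (hb : b ∈ uIcc (-1) 1) :
      IntervalIntegrable (fun x => chi δ x • f x) volume a b :=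
    (hf.continuousOn_smul (continuous_chi hδ0 hδ1).continuousOn).mono_set (uIcc_subset_uIcc ha hb)
  have hneg : -δ ∈ uIcc (-1 : ℝ) 1 := mem_uIcc_of_le (by linarith) (by linarith)
  have hpos : δ ∈ uIcc (-1 : ℝ) 1 := mem_uIcc_of_le (by linarith) hδ1.le
  have hleft : ∫ x in (-1 : ℝ)..(-δ), chi δ x • f x =
      (1 - δ)⁻¹ • ∫ x in (-1 : ℝ)..(-δ), (x + 1) • f x := by
    rw [← intervalIntegral.integral_smul]
    refine intervalIntegral.integral_congr_Ioo_of_le (by linarith) fun x hx => ?_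
    simp only [chi_of_le_neg hx.2.le, smul_smul, div_eq_inv_mul]
  have hmid : ∫ x in (-δ)..δ, chi δ x • f x = ∫ x in (-δ)..δ, f x := by
    refine intervalIntegral.integral_congr_Ioo_of_le (by linarith) fun x hx => ?_
    simp only [chi_of_mem_Ioc (Ioo_subset_Ioc_self hx), one_smul]
  have hright : ∫ x in δ..1, chi δ x • f x = (1 - δ)⁻¹ • ∫ x in δ..1, (1 - x) • f x := by
    rw [← intervalIntegral.integral_smul]
    refine intervalIntegral.integral_congr_Ioo_of_le hδ1.le fun x hx => ?_
    simp only [chi_of_lt hδ0 hx.1, smul_smul, div_eq_inv_mul]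
  rw [← intervalIntegral.integral_add_adjacent_intervals (hint left_mem_uIcc hpos)
      (hint hpos right_mem_uIcc),
    ← intervalIntegral.integral_add_adjacent_intervals (hint left_mem_uIcc hneg)
      (hint hneg hpos), hleft, hmid, hright]

variable [CompleteSpace E] {w₁ w₁' w₂ w₂' : ℝ → E}

theorem integral_chi_smul_eq_integral_add_flux (hδ0 : 0 ≤ δ) (hδ1 : δ < 1)
    (hf : IntervalIntegrable f volume (-1) 1)
    (hw₁ : IsPoissonSolution f w₁ w₁' (-1) (-δ)) (hw₁ab : w₁ (-1) = w₁ (-δ))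
    (hw₂ : IsPoissonSolution f w₂ w₂' δ 1) (hw₂ab : w₂ δ = w₂ 1) :
    ∫ x in (-1 : ℝ)..1, chi δ x • f x = -w₁' (-δ) + (∫ x in (-δ)..δ, f x) + w₂' δ := by
  have hδ : 1 - δ ≠ 0 := (sub_pos.2 hδ1).ne'
  have hleft : ∫ x in (-1 : ℝ)..(-δ), (x + 1) • f x = (1 - δ) • -w₁' (-δ) := by
    have hf₁ : IntervalIntegrable f volume (-1) (-δ) :=
      hf.mono_set (uIcc_subset_uIcc_left (mem_uIcc_of_le (by linarith) (by linarith)))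
    simpa [hw₁ab, neg_add_eq_sub] using hw₁.integral_sub_smul (by linarith) hf₁ (-1)
  have hright : ∫ x in δ..1, (1 - x) • f x = (1 - δ) • w₂' δ := by
    have hf₂ : IntervalIntegrable f volume δ 1 :=
      hf.mono_set (uIcc_subset_uIcc_right (mem_uIcc_of_le (by linarith) hδ1.le))
    calc ∫ x in δ..1, (1 - x) • f x = -∫ x in δ..1, (x - 1) • f x := by
          simp only [← intervalIntegral.integral_neg, ← neg_smul, neg_sub]
      _ = (1 - δ) • w₂' δ := by
          rw [hw₂.integral_sub_smul hδ1.le hf₂ 1, hw₂ab, ← neg_sub 1 δ]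
          module
  rw [integral_chi_smul hδ0 hδ1 hf, hleft, hright, inv_smul_smul₀ hδ, inv_smul_smul₀ hδ]

theorem neumann_compatibility_general (hδ0 : 0 ≤ δ) (hδ1 : δ < 1)
    (hf : IntervalIntegrable f volume (-1) 1)
    (hw₁ : IsPoissonSolution f w₁ w₁' (-1) (-δ)) (hw₁ab : w₁ (-1) = w₁ (-δ))
    (hw₂ : IsPoissonSolution f w₂ w₂' δ 1) (hw₂ab : w₂ δ = w₂ 1)
    {c₀ : E} (hc₀ : c₀ = ((1 - δ) / 2) • ∫ x in (-1 : ℝ)..1, chi δ x • f x) :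
    ((1 - δ)⁻¹ • c₀ + w₁' (-δ)) - (-((1 - δ)⁻¹ • c₀) + w₂' δ) = ∫ x in (-δ)..δ, f x := by
  have hδ : 1 - δ ≠ 0 := (sub_pos.2 hδ1).ne'
  have hhalf : (1 - δ)⁻¹ • c₀ = (1 / 2 : ℝ) • (-w₁' (-δ) + (∫ x in (-δ)..δ, f x) + w₂' δ) := by
    rw [hc₀, integral_chi_smul_eq_integral_add_flux hδ0 hδ1 hf hw₁ hw₁ab hw₂ hw₂ab, smul_smul]
    congr 1
    field_simp
  rw [hhalf]
  module

end Vector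

/-- Compatibility condition for the interior Neumann problem: with
`c₀ = ((1-δ)/2) ∫ f χ`, the one-sided derivative of `u₀ = c₀χ + w₁` from the left at
`-δ` minus the one-sided derivative of `u₀ = c₀χ + w₂` from the right at `δ` equals
`∫_{-δ}^{δ} f`. -/
theorem neumann_compatibility (δ : ℝ) (hδ0 : 0 < δ) (hδ1 : δ < 1)
    (f : ℝ → ℝ) (hf : ContinuousOn f (Set.Icc (-1 : ℝ) 1))
    (w₁ w₁' : ℝ → ℝ)
    (hw₁d : ∀ x ∈ Set.Icc (-1 : ℝ) (-δ),
      HasDerivWithinAt w₁ (w₁' x) (Set.Icc (-1 : ℝ) (-δ)) x)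
    (hw₁c : ContinuousOn w₁' (Set.Icc (-1 : ℝ) (-δ)))
    (hw₁dd : ∀ x ∈ Set.Ioo (-1 : ℝ) (-δ), HasDerivAt w₁' (-(f x)) x)
    (hw₁a : w₁ (-1) = 0) (hw₁b : w₁ (-δ) = 0)
    (w₂ w₂' : ℝ → ℝ)
    (hw₂d : ∀ x ∈ Set.Icc δ (1 : ℝ),
      HasDerivWithinAt w₂ (w₂' x) (Set.Icc δ (1 : ℝ)) x)
    (hw₂c : ContinuousOn w₂' (Set.Icc δ (1 : ℝ)))
    (hw₂dd : ∀ x ∈ Set.Ioo δ (1 : ℝ), HasDerivAt w₂' (-(f x)) x)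
    (hw₂a : w₂ δ = 0) (hw₂b : w₂ 1 = 0)
    (c₀ : ℝ) (hc₀ : c₀ = ((1 - δ) / 2) * ∫ x in (-1 : ℝ)..1, f x * chi δ x) :
    (c₀ / (1 - δ) + w₁' (-δ)) - (-(c₀ / (1 - δ)) + w₂' δ) = ∫ x in (-δ : ℝ)..δ, f x := by
  have hf_int := hf.intervalIntegrable_of_Icc (μ := MeasureTheory.volume) (by norm_num)
  simpa only [smul_eq_mul, inv_mul_eq_div] using
    neumann_compatibility_general hδ0.le hδ1 hf_int ⟨hw₁d, hw₁c, hw₁dd⟩ (hw₁a.trans hw₁b.symm)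
      ⟨hw₂d, hw₂c, hw₂dd⟩ (hw₂a.trans hw₂b.symm)
      (by simpa only [smul_eq_mul, mul_comm (chi δ _)] using hc₀)
end
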